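/- Let q be a prime power, a a positive integer, and use weights (1, 1, a) on 𝔽_q[x_0, x_1, x_2]. Set d_2 = (q−1)/gcd(q−1, a) and Y = {(1, t_1, t_2^a) : t_1, t_2 ∈ 𝔽_q^×} ⊆ 𝔽_q^3. If 0 ≤ α ≤ q−2, then the dimension over 𝔽_q of the code C_{α,Y} equals (μ_2 + 1)(α + 1) − a·μ_2(μ_2 + 1)/2, where μ_2 = min(⌊α/a⌋, d_2 − 1). -/

import Mathlib

open MvPolynomial

/-- Evaluation of multivariate polynomials at the points of a set `Y`, as a linear map. -/
noncomputable def evalOn {n : ℕ} (F : Type) [CommSemiring F] (Y : Set (Fin n → F)) :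
    MvPolynomial (Fin n) F →ₗ[F] (Y → F) where
  toFun P := fun y => eval y.val P
  map_add' := by intro P Q; funext y; simp
  map_smul' := by intro c P; funext y; simp [MvPolynomial.smul_eval]

/-- The evaluation code: image of the space of weighted homogeneous polynomials of
degree `α` under evaluation at the points of `Y`. -/
noncomputable def code {n : ℕ} (F : Type) [Field F] (w : Fin n → ℕ) (α : ℕ)
    (Y : Set (Fin n → F)) : Submodule F (Y → F) :=
  Submodule.map (evalOn F Y) (weightedHomogeneousSubmodule F w α)

/-!
Setting `x₀ = 1` turns forms of weighted degree `α` into all polynomials in the remaining variables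
of weighted degree at most `α`, so the code is an affine evaluation code on a grid `A₁ × ⋯ × Aₙ`.
There, reducing a power of `xᵢ` modulo `∏_{b ∈ Aᵢ} (xᵢ - b)` only lowers exponents. Hence the
monomials of weighted degree at most `α` with `i`-th exponent below `#Aᵢ` span the code, and they
are linearly independent because a polynomial of degree below `#Aᵢ` in each `xᵢ` that vanishes on
the grid is zero. Here `A₁ = 𝔽ˣ` has more than `α` elements, so it imposes no condition, and `A₂`,
the group of `a`-th powers, has `d₂` elements; counting the exponents by rows gives an arithmetic
progression.
-/

theorem exists_polynomial_eval_eq_pow {R : Type*} [CommRing R] [Nontrivial R] (A : Finset R)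
    (k : ℕ) :
    ∃ p : Polynomial R, (∀ j ∈ p.support, j ≤ k ∧ j < A.card) ∧ ∀ x ∈ A, p.eval x = x ^ k := by
  refine ⟨Polynomial.X ^ k %ₘ Lagrange.nodal A id, fun j hj ↦ ⟨?_, ?_⟩, fun x hx ↦ ?_⟩
  · exact (Polynomial.le_natDegree_of_mem_supp j hj).trans <|
      Polynomial.natDegree_modByMonic_le_left.trans (Polynomial.natDegree_X_pow k).le
  · have hdeg := Polynomial.degree_modByMonic_lt (Polynomial.X ^ k)
      (Lagrange.nodal_monic (s := A) (v := (id : R → R)))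
    rw [Lagrange.degree_nodal] at hdeg
    exact_mod_cast (Polynomial.le_degree_of_mem_supp j hj).trans_lt hdeg
  · have hroot : (Lagrange.nodal A id).eval x = 0 := Lagrange.eval_nodal_at_node (v := id) hx
    simpa using Polynomial.aeval_modByMonic_eq_self_of_root (p := Polynomial.X ^ k) hroot

section Grid

variable {R : Type} [CommRing R] {n : ℕ}

theorem evalOn_monomial_mem_map_restrictSupport [Nontrivial R] (A : Fin n → Finset R)
    (m : Fin n →₀ ℕ) :
    evalOn R ↑(Fintype.piFinset A) (monomial m 1) ∈
      (restrictSupport R {e | e ≤ m ∧ ∀ i, e i < (A i).card}).map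
        (evalOn R ↑(Fintype.piFinset A)) := by
  choose p hsupp heval using fun i ↦ exists_polynomial_eval_eq_pow (A i) (m i)
  refine ⟨∑ e ∈ Fintype.piFinset fun i ↦ (p i).support,
    monomial (Finsupp.equivFunOnFinite.symm e) (∏ i, (p i).coeff (e i)), ?_, ?_⟩
  · refine Submodule.sum_mem _ fun e he ↦ (monomial_mem_restrictSupport R).2 (.inl ?_)
    have hbound i := hsupp i (e i) (Fintype.mem_piFinset.1 he i)
    exact ⟨fun i ↦ (hbound i).1, fun i ↦ (hbound i).2⟩
  · funext ⟨x, hx⟩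
    have hxA : ∀ i, x i ∈ A i := Fintype.mem_piFinset.1 hx
    calc eval x (∑ e ∈ Fintype.piFinset fun i ↦ (p i).support,
          monomial (Finsupp.equivFunOnFinite.symm e) (∏ i, (p i).coeff (e i)))
        = ∑ e ∈ Fintype.piFinset fun i ↦ (p i).support, ∏ i, (p i).coeff (e i) * x i ^ e i := by
          simp [eval_monomial, Finsupp.prod_fintype, Finset.prod_mul_distrib]
      _ = ∏ i, (p i).eval (x i) := by
          simp only [Polynomial.eval_eq_sum, Polynomial.sum_def, Finset.prod_univ_sum]
      _ = eval x (monomial m 1) := by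
          simp [eval_monomial, Finsupp.prod_fintype, heval _ _ (hxA _)]

theorem map_evalOn_restrictSupport_inter [Nontrivial R] (A : Fin n → Finset R)
    {s : Set (Fin n →₀ ℕ)} (hs : IsLowerSet s) :
    (restrictSupport R (s ∩ {m | ∀ i, m i < (A i).card})).map (evalOn R ↑(Fintype.piFinset A)) =
      (restrictSupport R s).map (evalOn R ↑(Fintype.piFinset A)) := by
  refine le_antisymm (Submodule.map_mono (restrictSupport_mono R Set.inter_subset_left)) ?_
  rw [restrictSupport_eq_span R s, Submodule.map_span_le]
  rintro _ ⟨m, hm, rfl⟩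
  have hle : restrictSupport R {e | e ≤ m ∧ ∀ i, e i < (A i).card} ≤
      restrictSupport R (s ∩ {m | ∀ i, m i < (A i).card}) :=
    restrictSupport_mono R fun _ he ↦ ⟨hs he.1 hm, he.2⟩
  exact Submodule.map_mono hle (evalOn_monomial_mem_map_restrictSupport A m)

theorem injOn_evalOn_restrictSupport [IsDomain R] (A : Fin n → Finset R) :
    Set.InjOn (evalOn R (Fintype.piFinset A : Set (Fin n → R)))
      (restrictSupport R {m : Fin n →₀ ℕ | ∀ i, m i < (A i).card}) := by
  refine LinearMap.injOn_of_disjoint_ker le_rfl (Submodule.disjoint_def.2 fun P hP hker ↦ ?_)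
  by_contra hP0
  obtain ⟨m, hm⟩ := support_nonempty.2 hP0
  have hdeg i : P.degreeOf i < (A i).card :=
    (degreeOf_lt_iff (Nat.zero_lt_of_lt (hP hm i))).2 fun e he ↦ hP he i
  exact hP0 <| eq_zero_of_eval_zero_at_prod_finset P A hdeg fun x hx ↦
    congrFun hker ⟨x, Fintype.mem_piFinset.2 hx⟩

theorem finrank_map_evalOn_restrictSupport [IsDomain R] (A : Fin n → Finset R)
    {s : Set (Fin n →₀ ℕ)} (hs : IsLowerSet s) :
    Module.finrank R ((restrictSupport R s).map (evalOn R ↑(Fintype.piFinset A))) =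
      (s ∩ {m | ∀ i, m i < (A i).card}).ncard := by
  have hinj := (injOn_evalOn_restrictSupport A).mono
    (restrictSupport_mono R (Set.inter_subset_right (s := s)))
  rw [← map_evalOn_restrictSupport_inter A hs, ← LinearMap.range_domRestrict,
    LinearMap.finrank_range_of_inj (Set.injOn_iff_injective.1 hinj),
    Module.finrank_eq_nat_card_basis (basisRestrictSupport R _), Nat.card_coe_set_eq]

end Grid

section Dehomogenize

variable {R : Type*} [CommSemiring R] {n : ℕ}

/-- The dehomogenization `x₀ = 1`, after which `x₁, …, xₙ` are renumbered from `0`. -/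
noncomputable def dehomogenize (R : Type*) [CommSemiring R] (n : ℕ) :
    MvPolynomial (Fin (n + 1)) R →ₐ[R] MvPolynomial (Fin n) R :=
  aeval (Matrix.vecCons 1 X)

theorem dehomogenize_monomial (e : Fin (n + 1) →₀ ℕ) (c : R) :
    dehomogenize R n (monomial e c) = monomial e.tail c := by
  rw [dehomogenize, aeval_monomial, monomial_eq (s := e.tail)]
  simp [Finsupp.prod_fintype, Fin.prod_univ_succ, Finsupp.tail_apply, algebraMap_eq]

theorem eval_dehomogenize (P : MvPolynomial (Fin (n + 1)) R) (x : Fin n → R) :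
    eval x (dehomogenize R n P) = eval (Matrix.vecCons 1 x) P := by
  rw [dehomogenize, aeval_def, eval_eval₂, ← eval₂_id]
  congr 1
  · ext; simp [algebraMap_eq]
  · funext i
    cases i using Fin.cases <;> simp

theorem weight_vecCons {M : Type*} [AddCommMonoid M] (a : M) (w : Fin n → M)
    (e : Fin (n + 1) →₀ ℕ) :
    Finsupp.weight (Matrix.vecCons a w) e = e 0 • a + Finsupp.weight w e.tail := by
  simp [Finsupp.weight_apply, Finsupp.sum_fintype, Fin.sum_univ_succ, Finsupp.tail_apply]

theorem map_dehomogenize_weightedHomogeneousSubmodule (w : Fin n → ℕ) (α : ℕ) :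
    (weightedHomogeneousSubmodule R (Matrix.vecCons 1 w) α).map (dehomogenize R n).toLinearMap =
      restrictSupport R {m | Finsupp.weight w m ≤ α} := by
  have htail : Finsupp.tail '' {e : Fin (n + 1) →₀ ℕ | Finsupp.weight (Matrix.vecCons 1 w) e = α} =
      {m | Finsupp.weight w m ≤ α} := by
    ext m
    constructor
    · rintro ⟨e, he, rfl⟩
      exact (Nat.le_add_left _ _).trans_eq ((weight_vecCons 1 w e).symm.trans he)
    · intro hm
      refine ⟨Finsupp.cons (α - Finsupp.weight w m) m, ?_, Finsupp.tail_cons _ _⟩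
      simpa [weight_vecCons] using Nat.sub_add_cancel hm
  have hspan : weightedHomogeneousSubmodule R (Matrix.vecCons 1 w) α =
      restrictSupport R {e | Finsupp.weight (Matrix.vecCons 1 w) e = α} :=
    weightedHomogeneousSubmodule_eq_finsupp_supported R _ α
  rw [hspan, restrictSupport_eq_span, restrictSupport_eq_span, Submodule.map_span, ← htail,
    Set.image_image, Set.image_image]
  simp only [AlgHom.toLinearMap_apply, dehomogenize_monomial]

end Dehomogenize

section Code

variable {F : Type} [Field F] {n : ℕ}

theorem finrank_code_vecCons_one (w : Fin n → ℕ) (α : ℕ) (Y : Set (Fin n → F)) :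
    Module.finrank F (code F (Matrix.vecCons 1 w) α (Matrix.vecCons 1 '' Y)) =
      Module.finrank F ((restrictSupport F {m | Finsupp.weight w m ≤ α}).map (evalOn F Y)) := by
  let chart : Y ≃ Matrix.vecCons (1 : F) '' Y :=
    Equiv.Set.image _ Y (Fin.cons_right_injective (α := fun _ ↦ F) 1)
  let pullback := LinearEquiv.funCongrLeft F F chart
  have hpullback : pullback.toLinearMap ∘ₗ evalOn F (Matrix.vecCons 1 '' Y) =
      evalOn F Y ∘ₗ (dehomogenize F n).toLinearMap :=
    LinearMap.ext fun P ↦ funext fun y ↦ (eval_dehomogenize P y.1).symm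
  rw [← map_dehomogenize_weightedHomogeneousSubmodule, ← Submodule.map_comp, ← hpullback,
    Submodule.map_comp]
  exact (pullback.finrank_map_eq _).symm

theorem isLowerSet_setOf_weight_le {σ M : Type*} [AddCommMonoid M] [PartialOrder M]
    [CanonicallyOrderedAdd M] (w : σ → M) (α : M) :
    IsLowerSet {m : σ →₀ ℕ | Finsupp.weight w m ≤ α} := by
  intro m m' hle hm
  obtain ⟨c, rfl⟩ := le_iff_exists_add.1 hle
  rw [Set.mem_ofPred_eq, map_add] at hm
  exact le_self_add.trans hm

theorem finrank_code_grid (w : Fin n → ℕ) (α : ℕ) (A : Fin n → Finset F) :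
    Module.finrank F (code F (Matrix.vecCons 1 w) α
        (Matrix.vecCons 1 '' (Fintype.piFinset A : Set (Fin n → F)))) =
      {m : Fin n →₀ ℕ | Finsupp.weight w m ≤ α ∧ ∀ i, m i < (A i).card}.ncard := by
  rw [finrank_code_vecCons_one,
    finrank_map_evalOn_restrictSupport A (isLowerSet_setOf_weight_le w α)]
  rfl

end Code

theorem sum_range_sub_mul_add_one {a α μ : ℕ} (h : a * μ ≤ α) :
    ((∑ k ∈ Finset.range (μ + 1), (α - a * k + 1) : ℕ) : ℤ) =
      (μ + 1) * (α + 1) - a * μ * (μ + 1) / 2 := by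
  have hterm : ∀ k ∈ Finset.range (μ + 1), ((α - a * k + 1 : ℕ) : ℤ) = (α + 1) - a * k := by
    intro k hk
    have hak : a * k ≤ α := (Nat.mul_le_mul_left a (Finset.mem_range_succ_iff.1 hk)).trans h
    push_cast [hak]
    ring
  have hgauss : (a : ℤ) * μ * (μ + 1) = 2 * (a * ∑ k ∈ Finset.range (μ + 1), (k : ℤ)) := by
    have hsum := Finset.sum_range_id_mul_two (μ + 1)
    rw [Nat.add_sub_cancel] at hsum
    zify at hsum
    linear_combination (-a : ℤ) * hsum
  rw [hgauss, Int.mul_ediv_cancel_left _ two_ne_zero, Nat.cast_sum, Finset.sum_congr rfl hterm,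
    Finset.sum_sub_distrib, ← Finset.mul_sum]
  simp

theorem ncard_setOf_weight_le_and_lt {a : ℕ} (ha : 0 < a) {α d₁ : ℕ} (hα : α < d₁) {d₂ : ℕ}
    (hd₂ : 0 < d₂) :
    {m : Fin 2 →₀ ℕ | Finsupp.weight ![1, a] m ≤ α ∧ m 0 < d₁ ∧ m 1 < d₂}.ncard =
      ∑ k ∈ Finset.range (min (α / a) (d₂ - 1) + 1), (α - a * k + 1) := by
  let I : Finset (Σ _ : ℕ, ℕ) :=
    (Finset.range (min (α / a) (d₂ - 1) + 1)).sigma fun k ↦ Finset.range (α - a * k + 1)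
  let expEquiv : (Fin 2 →₀ ℕ) ≃ Σ _ : ℕ, ℕ :=
    (Finsupp.equivFunOnFinite.trans (finTwoArrowEquiv ℕ)).trans
      ((Equiv.prodComm ℕ ℕ).trans (Equiv.sigmaEquivProd ℕ ℕ).symm)
  have hrow (m : Fin 2 →₀ ℕ) : Finsupp.weight ![1, a] m ≤ α ∧ m 0 < d₁ ∧ m 1 < d₂ ↔
      m 1 ≤ min (α / a) (d₂ - 1) ∧ m 0 ≤ α - a * m 1 := by
    have hweight : Finsupp.weight ![1, a] m = m 0 + a * m 1 := by
      simp [Finsupp.weight_apply, Finsupp.sum_fintype, mul_comm]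
    have hdiv : m 1 ≤ α / a ↔ a * m 1 ≤ α := by rw [Nat.le_div_iff_mul_le ha, mul_comm]
    rw [hweight, le_min_iff, hdiv]
    omega
  have hI : {m : Fin 2 →₀ ℕ | Finsupp.weight ![1, a] m ≤ α ∧ m 0 < d₁ ∧ m 1 < d₂} =
      expEquiv ⁻¹' I := by
    ext m
    rw [Set.mem_ofPred_eq, hrow]
    simp [I, expEquiv]
  rw [hI, Set.ncard_preimage_of_injective_subset_range expEquiv.injective (by simp),
    Set.ncard_coe_finset, Finset.card_sigma]
  simp only [Finset.card_range]

theorem card_image_units_pow (F : Type*) [Field F] [Fintype F] [DecidableEq F] (a : ℕ) :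
    (Finset.univ.image fun t : Fˣ ↦ (t : F) ^ a).card =
      (Fintype.card F - 1) / (Fintype.card F - 1).gcd a := by
  have himage : ((Finset.univ.image fun t : Fˣ ↦ (t : F) ^ a : Finset F) : Set F) =
      Units.val '' ((powMonoidHom a : Fˣ →* Fˣ).range : Set Fˣ) := by
    ext; simp
  rw [← Set.ncard_coe_finset, himage, Set.ncard_image_of_injective _ Units.val_injective,
    ← Nat.card_coe_set_eq, SetLike.coe_sort_coe, IsCyclic.card_powMonoidHom_range,
    Nat.card_eq_fintype_card, Fintype.card_units]

theorem card_image_units_val (F : Type*) [Field F] [Fintype F] [DecidableEq F] :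
    (Finset.univ.image (Units.val : Fˣ → F)).card = Fintype.card F - 1 := by
  rw [Finset.card_image_of_injective _ Units.val_injective, Finset.card_univ, Fintype.card_units]

theorem stmt7_general (F : Type) [Field F] (A B : Finset F) (hB : B.Nonempty)
    (a : ℕ) (ha : 0 < a) (α : ℕ) (hα : α < A.card)
    (μ2 : ℕ) (hμ2 : μ2 = min (α / a) (B.card - 1)) :
    (Module.finrank F (code F ![1, 1, a] α {y | ∃ s ∈ A, ∃ t ∈ B, y = ![1, s, t]}) : ℤ) =
      (μ2 + 1) * (α + 1) - a * μ2 * (μ2 + 1) / 2 := by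
  have hgrid : {y | ∃ s ∈ A, ∃ t ∈ B, y = ![1, s, t]} =
      Matrix.vecCons 1 '' (Fintype.piFinset ![A, B] : Set (Fin 2 → F)) := by
    ext y
    constructor
    · rintro ⟨s, hs, t, ht, rfl⟩
      exact ⟨![s, t], by simp [hs, ht, Fin.forall_fin_two], rfl⟩
    · rintro ⟨x, hx, rfl⟩
      have hxAB := Fintype.mem_piFinset.1 hx
      refine ⟨x 0, hxAB 0, x 1, hxAB 1, ?_⟩
      ext i
      fin_cases i <;> rfl
  have hμ : a * μ2 ≤ α := by
    rw [hμ2]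
    exact (Nat.mul_le_mul_left a (min_le_left _ _)).trans (Nat.mul_div_le α a)
  rw [← sum_range_sub_mul_add_one hμ, hμ2, ← ncard_setOf_weight_le_and_lt ha hα hB.card_pos, hgrid,
    finrank_code_grid]
  simp [Fin.forall_fin_two]

/-- With `q` the cardinality of a finite field `𝔽`, a positive
integer `a`, weights `(1, 1, a)` on `𝔽[x₀, x₁, x₂]`, `d₂ = (q-1)/gcd(q-1, a)` and
`Y = {(1, t₁, t₂^a) : t₁, t₂ ∈ 𝔽ˣ}`: if `0 ≤ α ≤ q-2` then
`dim C_{α,Y} = (μ₂+1)(α+1) - a·μ₂(μ₂+1)/2` where `μ₂ = min(⌊α/a⌋, d₂-1)`. -/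
theorem stmt7 (F : Type) [Field F] [Fintype F] (q : ℕ) (hq : Fintype.card F = q)
    (a : ℕ) (ha : 0 < a)
    (d2 : ℕ) (hd2 : d2 = (q - 1) / Nat.gcd (q - 1) a)
    (Y : Set (Fin 3 → F))
    (hY : Y = {y | ∃ t1 t2 : Fˣ, y = ![1, (t1 : F), (t2 : F) ^ a]})
    (α : ℕ) (hα : α ≤ q - 2)
    (μ2 : ℕ) (hμ2 : μ2 = min (α / a) (d2 - 1)) :
    (Module.finrank F (code F ![1, 1, a] α Y) : ℤ) =
      (μ2 + 1) * (α + 1) - a * μ2 * (μ2 + 1) / 2 := by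
  classical
  subst hq hd2
  have hgrid : Y = {y | ∃ s ∈ Finset.univ.image (Units.val : Fˣ → F),
      ∃ t ∈ Finset.univ.image fun t : Fˣ ↦ (t : F) ^ a, y = ![1, s, t]} := by
    simp [hY]
  have hcard : 1 < Fintype.card F := Fintype.one_lt_card
  rw [hgrid]
  exact stmt7_general F _ _ (Finset.univ_nonempty.image _) a ha α
    (by rw [card_image_units_val]; omega) μ2 (by rwa [card_image_units_pow])
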